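/- (Generalized Abel identity.) Let a, b, c, d : ℝ → ℝ with a, c, d continuously differentiable, b continuous, a(t) ≠ 0 on an open interval I, and Q(t) = 4ab + (a′/a − c − d)(c+d) − c′ − d′. Let κ₁, κ₂ : I → ℝ be twice continuously differentiable nonvanishing solutions of κᵢ′′ − (a′/a)κᵢ′ + Qκᵢ = C₀⁽ⁱ⁾(2a)²/κᵢ³ (i = 1, 2) with real constants C₀⁽¹⁾, C₀⁽²⁾, and set W = κ₁κ₂′ − κ₁′κ₂. Then for all t ∈ I: (1/(2a))·d/dt(W/(2a)) + C₀⁽¹⁾·κ₂/κ₁³ − C₀⁽²⁾·κ₁/κ₂³ = 0. (When C₀⁽¹⁾ = C₀⁽²⁾ = 0 this reduces to Abel's theorem W/(2a) = constant.) -/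

import Mathlib

/-- Q(t) = 4ab + (a′/a − c − d)(c+d) − c′ − d′. -/
noncomputable def Qfun (a b c d : ℝ → ℝ) (t : ℝ) : ℝ :=
  4 * a t * b t + (deriv a t / a t - c t - d t) * (c t + d t) - deriv c t - deriv d t

/-- The Wronskian W = κ₁κ₂′ − κ₁′κ₂. -/
noncomputable def Wfun (κ₁ κ₂ : ℝ → ℝ) (t : ℝ) : ℝ :=
  κ₁ t * deriv κ₂ t - deriv κ₁ t * κ₂ t

/-!
Differentiating the Wronskian of two solutions of `κᵢ'' - p κᵢ' + q κᵢ = gᵢ` cancels the `κ₁' κ₂'`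
terms, and substituting the equations cancels `q`, leaving `W' = p W + (κ₁ g₂ - g₁ κ₂)`. For
`p = a' / a` the function `2a` solves `ρ' = p ρ`, so `(W / 2a)' = (κ₁ g₂ - g₁ κ₂) / 2a`.
With `gᵢ = fᵢ (2a)²`, dividing once more by `2a` gives `κ₁ f₂ - f₁ κ₂`; the generalized Ermakov
equation is the case `fᵢ = C₀⁽ⁱ⁾ / κᵢ³`.
-/

section Wronskian

variable {𝕜 𝔸 : Type*} [NontriviallyNormedField 𝕜] [NormedCommRing 𝔸] [NormedAlgebra 𝕜 𝔸]
  {u u' v v' : 𝕜 → 𝔸} {u'' v'' p q f g : 𝔸} {t : 𝕜}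

theorem hasDerivAt_wronskian
    (hu : HasDerivAt u (u' t) t) (hu' : HasDerivAt u' u'' t)
    (hv : HasDerivAt v (v' t) t) (hv' : HasDerivAt v' v'' t) :
    HasDerivAt (fun s => u s * v' s - u' s * v s) (u t * v'' - u'' * v t) t :=
  ((hu.fun_mul hv').fun_sub (hu'.fun_mul hv)).congr_deriv (by ring)

theorem hasDerivAt_wronskian_of_linear_ode
    (hu : HasDerivAt u (u' t) t) (hu' : HasDerivAt u' u'' t)
    (hv : HasDerivAt v (v' t) t) (hv' : HasDerivAt v' v'' t)
    (hu_ode : u'' - p * u' t + q * u t = f) (hv_ode : v'' - p * v' t + q * v t = g) :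
    HasDerivAt (fun s => u s * v' s - u' s * v s)
      (p * (u t * v' t - u' t * v t) + (u t * g - f * v t)) t :=
  (hasDerivAt_wronskian hu hu' hv hv').congr_deriv (by rw [← hu_ode, ← hv_ode]; ring)

end Wronskian

section Abel

variable {𝕜 𝕂 : Type*} [NontriviallyNormedField 𝕜] [NontriviallyNormedField 𝕂]
  [NormedAlgebra 𝕜 𝕂] {t : 𝕜}

theorem hasDerivAt_div_homogeneous_solution {w ρ : 𝕜 → 𝕂} {p r : 𝕂}
    (hw : HasDerivAt w (p * w t + r) t) (hρ : HasDerivAt ρ (p * ρ t) t) (hρt : ρ t ≠ 0) :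
    HasDerivAt (fun s => w s / ρ s) (r / ρ t) t :=
  (hw.fun_div hρ hρt).congr_deriv (by field_simp; ring)

theorem statement_14_general [NeZero (2 : 𝕂)] {a κ₁ κ₂ : 𝕜 → 𝕂} {q f₁ f₂ : 𝕂}
    (ha : DifferentiableAt 𝕜 a t) (hat : a t ≠ 0)
    (hκ₁ : DifferentiableAt 𝕜 κ₁ t) (hκ₁' : DifferentiableAt 𝕜 (deriv κ₁) t)
    (hκ₂ : DifferentiableAt 𝕜 κ₂ t) (hκ₂' : DifferentiableAt 𝕜 (deriv κ₂) t)
    (hκ₁_ode : deriv (deriv κ₁) t - (deriv a t / a t) * deriv κ₁ t + q * κ₁ t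
      = f₁ * (2 * a t) ^ 2)
    (hκ₂_ode : deriv (deriv κ₂) t - (deriv a t / a t) * deriv κ₂ t + q * κ₂ t
      = f₂ * (2 * a t) ^ 2) :
    (1 / (2 * a t)) * deriv (fun s => (κ₁ s * deriv κ₂ s - deriv κ₁ s * κ₂ s) / (2 * a s)) t
      + f₁ * κ₂ t - f₂ * κ₁ t = 0 := by
  have h2a : 2 * a t ≠ 0 := mul_ne_zero two_ne_zero hat
  have h2a_deriv : HasDerivAt (fun s => 2 * a s) (deriv a t / a t * (2 * a t)) t :=
    (ha.hasDerivAt.const_mul 2).congr_deriv (by field_simp)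
  have hW := hasDerivAt_wronskian_of_linear_ode hκ₁.hasDerivAt hκ₁'.hasDerivAt
    hκ₂.hasDerivAt hκ₂'.hasDerivAt hκ₁_ode hκ₂_ode
  rw [(hasDerivAt_div_homogeneous_solution hW h2a_deriv h2a).deriv]
  field_simp
  ring

end Abel

/-- Generalized Abel identity: for two nonvanishing solutions κ₁, κ₂ of
κᵢ′′ − (a′/a)κᵢ′ + Qκᵢ = C₀⁽ⁱ⁾(2a)²/κᵢ³ on an open interval (t₁,t₂),
(1/(2a))·(W/(2a))′ + C₀⁽¹⁾κ₂/κ₁³ − C₀⁽²⁾κ₁/κ₂³ = 0. -/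
theorem statement_14
    (a b c d κ₁ κ₂ : ℝ → ℝ) (t₁ t₂ : ℝ) (C₀₁ C₀₂ : ℝ)
    (ha : ContDiff ℝ 1 a) (hc : ContDiff ℝ 1 c) (hd : ContDiff ℝ 1 d)
    (hb : Continuous b)
    (hane : ∀ t ∈ Set.Ioo t₁ t₂, a t ≠ 0)
    (hκ₁ : ContDiffOn ℝ 2 κ₁ (Set.Ioo t₁ t₂)) (hκ₂ : ContDiffOn ℝ 2 κ₂ (Set.Ioo t₁ t₂))
    (hκ₁ne : ∀ t ∈ Set.Ioo t₁ t₂, κ₁ t ≠ 0) (hκ₂ne : ∀ t ∈ Set.Ioo t₁ t₂, κ₂ t ≠ 0)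
    (hEq1 : ∀ t ∈ Set.Ioo t₁ t₂, deriv (deriv κ₁) t - (deriv a t / a t) * deriv κ₁ t
        + Qfun a b c d t * κ₁ t = C₀₁ * (2 * a t) ^ 2 / κ₁ t ^ 3)
    (hEq2 : ∀ t ∈ Set.Ioo t₁ t₂, deriv (deriv κ₂) t - (deriv a t / a t) * deriv κ₂ t
        + Qfun a b c d t * κ₂ t = C₀₂ * (2 * a t) ^ 2 / κ₂ t ^ 3) :
    ∀ t ∈ Set.Ioo t₁ t₂,
      (1 / (2 * a t)) * deriv (fun s => Wfun κ₁ κ₂ s / (2 * a s)) t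
          + C₀₁ * κ₂ t / κ₁ t ^ 3 - C₀₂ * κ₁ t / κ₂ t ^ 3 = 0 := by
  intro t ht
  have hκ₁t : ContDiffAt ℝ 2 κ₁ t := hκ₁.contDiffAt (isOpen_Ioo.mem_nhds ht)
  have hκ₂t : ContDiffAt ℝ 2 κ₂ t := hκ₂.contDiffAt (isOpen_Ioo.mem_nhds ht)
  simp only [mul_div_right_comm] at hEq1 hEq2 ⊢
  exact statement_14_general (ha.differentiable one_ne_zero t) (hane t ht)
    (hκ₁t.differentiableAt two_ne_zero)
    ((hκ₁t.derivWithin one_add_one_eq_two.le).differentiableAt one_ne_zero)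
    (hκ₂t.differentiableAt two_ne_zero)
    ((hκ₂t.derivWithin one_add_one_eq_two.le).differentiableAt one_ne_zero)
    (hEq1 t ht) (hEq2 t ht)
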